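/- Let M be a (2n+1)-dimensional almost Kenmotsu manifold and V a vector field such that (£_V ∇)(X,Y) = 2β[g(X,Y) - η(X)η(Y) + g(h'X,Y)]ξ for all vector fields X, Y, with β a constant. Then (£_V ∇)(X,ξ) = 0, and moreover (∇_Y £_V ∇)(X,ξ) = -2β[g(X,Y) - η(X)η(Y) + 2g(h'X,Y) + g(h'²X,Y)]ξ for all vector fields X, Y. -/

import Mathlib

/-!
Abstract framework for almost Kenmotsu geometry.

`SF` plays the role of the ring `C^∞(M)` of smooth functions on a manifold `M`
(a commutative `ℝ`-algebra; real constants are embedded via `algebraMap ℝ SF`),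
and `VF` plays the role of the `C^∞(M)`-module of smooth vector fields on `M`.
The structure `AlmostKenmotsuMfld n` packages a `(2n+1)`-dimensional almost
Kenmotsu manifold: the almost contact metric structure `(φ, ξ, η, g)` with its
defining identities, the Lie bracket, the action of vector fields on functions,
the Levi-Civita connection `∇`, the tensors `h = (1/2)£_ξ φ` and `h' = h ∘ φ`,
the scalar curvature, and the almost Kenmotsu conditions (`dη = 0` together
with the characteristic identity `∇_X ξ = X - η(X)ξ - φhX`).  The dimension
`2n+1` is encoded by an orthonormal frame.
-/

structure AlmostKenmotsuMfld (n : ℕ) where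
  /-- the ring of smooth functions on `M` -/
  SF : Type
  /-- the module of smooth vector fields on `M` -/
  VF : Type
  [sfRing : CommRing SF]
  [sfAlg : Algebra ℝ SF]
  [vfGroup : AddCommGroup VF]
  [vfMod : Module SF VF]
  /-- the Riemannian metric `g` -/
  g : VF → VF → SF
  /-- the `(1,1)`-tensor field `φ` -/
  phi : VF → VF
  /-- the characteristic (Reeb) vector field `ξ` -/
  xi : VF
  /-- the `1`-form `η` -/
  eta : VF → SF
  /-- the Levi-Civita connection `∇` -/
  nabla : VF → VF → VF
  /-- the Lie bracket `[X,Y]` of vector fields -/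
  bracket : VF → VF → VF
  /-- the action `X(f)` of a vector field on a function -/
  act : VF → SF → SF
  /-- the tensor `h = (1/2) £_ξ φ` -/
  h : VF → VF
  /-- the tensor `h' = h ∘ φ` -/
  h' : VF → VF
  /-- the scalar curvature `r` -/
  scal : SF
  /-- an orthonormal frame; it encodes that `M` is `(2n+1)`-dimensional -/
  frame : Fin (2 * n + 1) → VF
  -- the metric
  g_symm : ∀ X Y, g X Y = g Y X
  g_add_left : ∀ X Y Z, g (X + Y) Z = g X Z + g Y Z
  g_smul_left : ∀ (f : SF) (X Y : VF), g (f • X) Y = f * g X Y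
  frame_ortho : ∀ i j, g (frame i) (frame j) = if i = j then 1 else 0
  frame_complete : ∀ X Y, g X Y = ∑ i, g X (frame i) * g (frame i) Y
  -- the almost contact metric structure
  phi_phi : ∀ X, phi (phi X) = -X + eta X • xi
  eta_xi : eta xi = 1
  phi_xi : phi xi = 0
  eta_phi : ∀ X, eta (phi X) = 0
  g_phi_phi : ∀ X Y, g (phi X) (phi Y) = g X Y - eta X * eta Y
  eta_eq : ∀ X, eta X = g X xi
  -- vector fields act as derivations on functions
  act_add : ∀ X f₁ f₂, act X (f₁ + f₂) = act X f₁ + act X f₂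
  act_mul : ∀ X f₁ f₂, act X (f₁ * f₂) = act X f₁ * f₂ + f₁ * act X f₂
  act_const : ∀ X (c : ℝ), act X (algebraMap ℝ SF c) = 0
  act_add_left : ∀ X Y f, act (X + Y) f = act X f + act Y f
  act_smul_left : ∀ (f₁ : SF) X f, act (f₁ • X) f = f₁ * act X f
  -- the Levi-Civita connection
  nabla_add_left : ∀ X Y Z, nabla (X + Y) Z = nabla X Z + nabla Y Z
  nabla_add_right : ∀ X Y Z, nabla X (Y + Z) = nabla X Y + nabla X Z
  nabla_smul_left : ∀ (f : SF) (X Y : VF), nabla (f • X) Y = f • nabla X Y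
  nabla_leibniz : ∀ (f : SF) (X Y : VF), nabla X (f • Y) = act X f • Y + f • nabla X Y
  nabla_metric : ∀ X Y Z, act X (g Y Z) = g (nabla X Y) Z + g Y (nabla X Z)
  torsion_free : ∀ X Y, nabla X Y - nabla Y X = bracket X Y
  -- the tensors `h` and `h'`
  h_def : ∀ X, (2 : SF) • h X = bracket xi (phi X) - phi (bracket xi X)
  h'_def : ∀ X, h' X = h (phi X)
  -- almost Kenmotsu conditions: `dη = 0` and `∇_X ξ = X - η(X)ξ - φhX`
  d_eta : ∀ X Y, act X (eta Y) - act Y (eta X) - eta (bracket X Y) = 0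
  nabla_xi : ∀ X, nabla X xi = X - eta X • xi - phi (h X)

attribute [instance] AlmostKenmotsuMfld.sfRing AlmostKenmotsuMfld.sfAlg
  AlmostKenmotsuMfld.vfGroup AlmostKenmotsuMfld.vfMod

namespace AlmostKenmotsuMfld

variable {n : ℕ} (S : AlmostKenmotsuMfld n)

/-- The Riemann curvature tensor `R(X,Y)Z`. -/
def R (X Y Z : S.VF) : S.VF :=
  S.nabla X (S.nabla Y Z) - S.nabla Y (S.nabla X Z) - S.nabla (S.bracket X Y) Z

/-- The Lie derivative `(£_V g)(X,Y)` of the metric. -/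
def lieg (V X Y : S.VF) : S.SF :=
  S.act V (S.g X Y) - S.g (S.bracket V X) Y - S.g X (S.bracket V Y)

/-- The Lie derivative `(£_V η)(X)` of the `1`-form `η`. -/
def lieEta (V X : S.VF) : S.SF :=
  S.act V (S.eta X) - S.eta (S.bracket V X)

/-- The Lie derivative `(£_V h')(X)` of the `(1,1)`-tensor `h'`. -/
def lieH' (V X : S.VF) : S.VF :=
  S.bracket V (S.h' X) - S.h' (S.bracket V X)

/-- The Lie derivative `(£_V ∇)(X,Y)` of the Levi-Civita connection. -/
def lieNabla (V X Y : S.VF) : S.VF :=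
  S.bracket V (S.nabla X Y) - S.nabla (S.bracket V X) Y - S.nabla X (S.bracket V Y)

/-- The Lie derivative `(£_V R)(X,Y)Z` of the curvature tensor. -/
def lieR (V X Y Z : S.VF) : S.VF :=
  S.bracket V (S.R X Y Z) - S.R (S.bracket V X) Y Z - S.R X (S.bracket V Y) Z
    - S.R X Y (S.bracket V Z)

/-- The covariant derivative `(∇_Z £_V ∇)(X,Y)` of the `(1,2)`-tensor `£_V ∇`. -/
def nablaLieNabla (V Z X Y : S.VF) : S.VF :=
  S.nabla Z (S.lieNabla V X Y) - S.lieNabla V (S.nabla Z X) Y - S.lieNabla V X (S.nabla Z Y)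

/-- `(g,V,λ,α)` is a quasi Yamabe soliton:
`(1/2)(£_V g)(X,Y) = (r - λ) g(X,Y) + α V♯(X) V♯(Y)`, where `V♯(X) = g(V,X)`,
`r` is the scalar curvature, `λ` a real constant and `α` a smooth function. -/
def IsQuasiYamabeSoliton (V : S.VF) (lam : ℝ) (alpha : S.SF) : Prop :=
  ∀ X Y, (1 / 2 : ℝ) • S.lieg V X Y
    = (S.scal - algebraMap ℝ S.SF lam) * S.g X Y + alpha * S.g V X * S.g V Y

/-- `ξ` belongs to the `(k,μ)'`-nullity distribution, i.e. `M` is a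
`(k,μ)'`-almost Kenmotsu manifold:
`R(X,Y)ξ = k[η(Y)X - η(X)Y] + μ[η(Y)h'X - η(X)h'Y]`. -/
def IsKMPrime (k μ : ℝ) : Prop :=
  ∀ X Y, S.R X Y S.xi
    = algebraMap ℝ S.SF k • (S.eta Y • X - S.eta X • Y)
      + algebraMap ℝ S.SF μ • (S.eta Y • S.h' X - S.eta X • S.h' Y)

end AlmostKenmotsuMfld

namespace AlmostKenmotsuMfld

variable {n : ℕ} (S : AlmostKenmotsuMfld n)

theorem aux_neg_left (X Y : S.VF) : S.g (-X) Y = -S.g X Y := by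
  have := S.g_smul_left (-1) X Y
  simpa using this

theorem aux_sub_left (X Y Z : S.VF) : S.g (X - Y) Z = S.g X Z - S.g Y Z := by
  rw [sub_eq_add_neg, S.g_add_left, aux_neg_left, sub_eq_add_neg]

theorem aux_neg_right (X Y : S.VF) : S.g X (-Y) = -S.g X Y := by
  rw [S.g_symm, aux_neg_left, S.g_symm]

theorem aux_sub_right (X Y Z : S.VF) : S.g X (Y - Z) = S.g X Y - S.g X Z := by
  rw [S.g_symm, aux_sub_left, S.g_symm Y, S.g_symm Z]

theorem aux_add_right (X Y Z : S.VF) : S.g X (Y + Z) = S.g X Y + S.g X Z := by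
  rw [S.g_symm, S.g_add_left, S.g_symm Y, S.g_symm Z]

theorem aux_smul_right (f : S.SF) (X Y : S.VF) : S.g X (f • Y) = f * S.g X Y := by
  rw [S.g_symm, S.g_smul_left, S.g_symm]

theorem aux_act_zero (X : S.VF) : S.act X 0 = 0 := by
  have := S.act_const X 0
  simpa using this

theorem aux_act_one (X : S.VF) : S.act X 1 = 0 := by
  have := S.act_const X 1
  simpa using this

theorem aux_two {a b : S.SF} (hab : 2 * a = 2 * b) : a = b := by
  have h2 : algebraMap ℝ S.SF (1 / 2) * 2 = 1 := by
    have : (2 : S.SF) = algebraMap ℝ S.SF 2 := (map_ofNat _ 2).symm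
    rw [this, ← map_mul]
    norm_num
  calc a = (algebraMap ℝ S.SF (1 / 2) * 2) * a := by rw [h2, one_mul]
    _ = algebraMap ℝ S.SF (1 / 2) * (2 * a) := by ring
    _ = algebraMap ℝ S.SF (1 / 2) * (2 * b) := by rw [hab]
    _ = (algebraMap ℝ S.SF (1 / 2) * 2) * b := by ring
    _ = b := by rw [h2, one_mul]

theorem aux_eta_br (Y : S.VF) : S.eta (S.bracket S.xi Y) = S.act S.xi (S.eta Y) := by
  have := S.d_eta S.xi Y
  rw [S.eta_xi, aux_act_one] at this
  linear_combination -this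

theorem aux_skew (X Y : S.VF) : S.g (S.phi X) Y = -S.g X (S.phi Y) := by
  have h1 := S.g_phi_phi X (S.phi Y)
  rw [S.phi_phi, S.eta_phi, aux_add_right, aux_neg_right, aux_smul_right, ← S.eta_eq,
    S.eta_phi] at h1
  linear_combination -h1

theorem aux_eta_h' (X : S.VF) : S.eta (S.h' X) = 0 := by
  apply aux_two S
  have h1 := congrArg (fun Z => S.g Z S.xi) (S.h_def (S.phi X))
  simp only [S.g_smul_left, aux_sub_left] at h1
  simp only [← S.eta_eq, S.eta_phi, aux_eta_br] at h1
  rw [← S.h'_def] at h1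
  rw [aux_act_zero] at h1
  rw [h1]; ring

theorem aux_nabla_neg (X Y : S.VF) : S.nabla X (-Y) = -S.nabla X Y := by
  have h0 : S.nabla X 0 = 0 := by
    have := S.nabla_add_right X 0 0
    simpa using this
  have := S.nabla_add_right X (-Y) Y
  rw [neg_add_cancel, h0] at this
  exact eq_neg_of_add_eq_zero_left this.symm

theorem aux_nabla_neg_left (X Y : S.VF) : S.nabla (-X) Y = -S.nabla X Y := by
  have := S.nabla_smul_left (-1) X Y
  simpa using this

theorem aux_br (X : S.VF) : S.bracket S.xi (S.phi (S.phi X))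
    = -S.bracket S.xi X + S.act S.xi (S.eta X) • S.xi := by
  rw [S.phi_phi, ← S.torsion_free, ← S.torsion_free, S.nabla_add_right, S.nabla_add_left,
    S.nabla_leibniz, S.nabla_smul_left, aux_nabla_neg, aux_nabla_neg_left]
  abel

theorem aux_anti (X Y : S.VF) : S.g (S.h' X) Y = -S.g (S.phi (S.h X)) Y := by
  apply aux_two S
  have h1 := congrArg (fun Z => S.g Z Y) (S.h_def (S.phi X))
  have h2 := congrArg (fun Z => S.g Z (S.phi Y)) (S.h_def X)
  simp only [S.g_smul_left, aux_sub_left, aux_br, S.g_add_left, aux_neg_left,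
    S.g_phi_phi, aux_eta_br] at h1 h2
  have h3 := aux_skew S (S.bracket S.xi (S.phi X)) Y
  have h4 := aux_skew S (S.h X) Y
  have h5 : S.eta Y = S.g S.xi Y := by rw [S.eta_eq, S.g_symm]
  rw [S.h'_def]
  rw [h5] at h2
  linear_combination h1 - h2 - h3 + 2 * h4

theorem aux_eta_nabla (X : S.VF) : S.eta (S.nabla X S.xi) = 0 := by
  rw [S.nabla_xi, S.eta_eq, aux_sub_left, aux_sub_left, S.g_smul_left]
  simp only [← S.eta_eq, S.eta_phi, S.eta_xi]
  ring

theorem aux_symm (X Y : S.VF) : S.g X (S.phi (S.h Y)) = S.g Y (S.phi (S.h X)) := by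
  have h1 := S.d_eta X Y
  rw [S.eta_eq, S.eta_eq, S.eta_eq, S.nabla_metric, S.nabla_metric, ← S.torsion_free,
    aux_sub_left, S.nabla_xi, S.nabla_xi] at h1
  simp only [aux_sub_right, aux_smul_right, ← S.eta_eq] at h1
  have h2 := S.g_symm X Y
  linear_combination h1 + h2

theorem aux_main (X Y : S.VF) : S.g X (S.phi (S.h Y)) = -S.g (S.h' X) Y := by
  rw [aux_anti, aux_symm, S.g_symm, neg_neg]

end AlmostKenmotsuMfld

/-- On a `(2n+1)`-dimensional almost Kenmotsu manifold, if a vector field `V` satisfies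
`(£_V ∇)(X,Y) = 2β[g(X,Y) - η(X)η(Y) + g(h'X,Y)]ξ` for a constant `β`, then
`(£_V ∇)(X,ξ) = 0` and
`(∇_Y £_V ∇)(X,ξ) = -2β[g(X,Y) - η(X)η(Y) + 2g(h'X,Y) + g(h'²X,Y)]ξ`
for all vector fields `X, Y`. -/
theorem nablaLieNabla_of_lieNabla_eq
    {n : ℕ} (S : AlmostKenmotsuMfld n) (V : S.VF) (beta : ℝ)
    (hyp : ∀ X Y, S.lieNabla V X Y
      = (algebraMap ℝ S.SF (2 * beta)
          * (S.g X Y - S.eta X * S.eta Y + S.g (S.h' X) Y)) • S.xi) :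
    (∀ X, S.lieNabla V X S.xi = 0) ∧
    (∀ X Y, S.nablaLieNabla V Y X S.xi
      = -((algebraMap ℝ S.SF (2 * beta)
          * (S.g X Y - S.eta X * S.eta Y + (2 : S.SF) * S.g (S.h' X) Y
              + S.g (S.h' (S.h' X)) Y)) • S.xi)) := by
  have key : ∀ X, S.lieNabla V X S.xi = 0 := by
    intro X
    rw [hyp, ← S.eta_eq, ← S.eta_eq, S.aux_eta_h', S.eta_xi]
    simp
  refine ⟨key, fun X Y => ?_⟩
  have h0 : S.nabla Y 0 = 0 := by
    have := S.nabla_add_right Y 0 0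
    simpa using this
  unfold AlmostKenmotsuMfld.nablaLieNabla
  rw [key, key, h0, hyp, S.aux_eta_nabla, S.nabla_xi, zero_sub, neg_zero, zero_sub]
  congr 2
  simp only [S.aux_sub_right, S.aux_smul_right, S.aux_main, ← S.eta_eq, S.aux_eta_h']
  ring
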